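/- Let A be an entire function and suppose that the differential equation w'' + A·w = 0 has three entire solutions w₁, w₂, w₃ that are pairwise linearly independent over ℂ and each of which has only real zeros (i.e. wⱼ(z) = 0 implies z ∈ ℝ for j = 1,2,3). Then A is constant. -/

import Mathlib

open Complex

/-- Two entire functions are linearly independent over `ℂ` if neither is a complex
scalar multiple of the other. -/
def LinIndepPair (f g : ℂ → ℂ) : Prop :=
  (¬ ∃ c : ℂ, ∀ z : ℂ, f z = c * g z) ∧ (¬ ∃ c : ℂ, ∀ z : ℂ, g z = c * f z)



/-- holomorphic logarithm on the unit disc -/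
lemma disc_log {f : ℂ → ℂ} (hf : DifferentiableOn ℂ f (Metric.ball 0 1))
    (h0 : ∀ z ∈ Metric.ball (0:ℂ) 1, f z ≠ 0) :
    ∃ l : ℂ → ℂ, (∀ z ∈ Metric.ball (0:ℂ) 1, HasDerivAt l (deriv f z / f z) z) ∧
      ∀ z ∈ Metric.ball (0:ℂ) 1, exp (l z) = f z := by
  have hd : DifferentiableOn ℂ (fun z => deriv f z / f z) (Metric.ball 0 1) :=
    (hf.deriv Metric.isOpen_ball).div hf h0
  obtain ⟨l, hl0, hl⟩ := hd.isExactOn_ball.with_val_at 0 (log (f 0))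
  have m0 : (0:ℂ) ∈ Metric.ball (0:ℂ) 1 := by simp
  refine ⟨l, hl, ?_⟩
  have key : ∀ z ∈ Metric.ball (0:ℂ) 1, HasDerivAt (fun z => exp (-l z) * f z) 0 z := by
    intro z hz
    have h1 := ((hl z hz).neg.cexp).mul
      (hf.differentiableAt (Metric.isOpen_ball.mem_nhds hz)).hasDerivAt
    refine h1.congr_deriv ?_
    have := h0 z hz
    field_simp
    ring
  intro z hz
  have hc : exp (-l z) * f z = exp (-l 0) * f 0 := by
    refine Metric.isOpen_ball.is_const_of_deriv_eq_zero (f := fun z => exp (-l z) * f z)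
      (convex_ball (0:ℂ) 1).isPreconnected ?_ ?_ hz m0
    · intro w hw; exact (key w hw).differentiableAt.differentiableWithinAt
    · intro w hw; exact (key w hw).deriv
  rw [hl0, exp_neg (log (f 0)), exp_log (h0 0 m0), inv_mul_cancel₀ (h0 0 m0), exp_neg] at hc
  have := exp_ne_zero (l z)
  field_simp at hc
  exact hc.symm

/-- Local covering statement. -/
lemma local_cover {g : ℂ → ℂ} {p : ℂ} {t : ℝ} (ht : 0 < t)
    (hg : DifferentiableOn ℂ g (Metric.ball p t)) {m : ℝ} (hm : 0 < m)
    (hp : ‖deriv g p‖ = m) (hb : ∀ z ∈ Metric.ball p t, ‖deriv g z‖ ≤ 2 * m) :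
    Metric.ball (g p) (m * t / 24) ⊆ g '' Metric.ball p t := by
  have hd' : DifferentiableOn ℂ (deriv g) (Metric.ball p t) := hg.deriv Metric.isOpen_ball
  have hD : ∀ z ∈ Metric.ball p t, dist (deriv g z) (deriv g p) ≤ 3 * m / t * dist z p := by
    intro z hz
    refine Complex.dist_le_div_mul_dist_of_mapsTo_ball hd' ?_ hz
    intro w hw
    rw [Metric.mem_closedBall, dist_eq_norm]
    calc _ ≤ ‖deriv g w‖ + ‖deriv g p‖ := norm_sub_le _ _
      _ ≤ 3 * m := by linarith [hb w hw]
  have hsub : Metric.closedBall p (t/6) ⊆ Metric.ball p t :=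
    Metric.closedBall_subset_ball (by linarith)
  have hlow : ∀ z ∈ Metric.sphere p (t/6), m * t / 12 ≤ ‖g z - g p‖ := by
    intro z hz
    have hz' : z ∈ Metric.closedBall p (t/6) := Metric.sphere_subset_closedBall hz
    have h1 : ‖(g z - deriv g p * z) - (g p - deriv g p * p)‖ ≤ m/2 * ‖z - p‖ := by
      refine (convex_closedBall p (t/6)).norm_image_sub_le_of_norm_hasDerivWithin_le
        (f := fun z => g z - deriv g p * z) (f' := fun z => deriv g z - deriv g p)
        ?_ ?_ (Metric.mem_closedBall_self (by linarith)) hz'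
      · intro x hx
        have hgx := (hg.differentiableAt (Metric.isOpen_ball.mem_nhds (hsub hx))).hasDerivAt
        have := hgx.fun_sub ((hasDerivAt_id x).const_mul (deriv g p))
        simpa using this.hasDerivWithinAt
      · intro x hx
        rw [← dist_eq_norm]
        refine (hD x (hsub hx)).trans ?_
        rw [Metric.mem_closedBall] at hx
        calc _ ≤ 3 * m / t * (t/6) := by gcongr
          _ = m / 2 := by field_simp; norm_num
    rw [mem_sphere_iff_norm] at hz
    have h2 : ‖deriv g p * (z - p)‖ = m * (t/6) := by rw [norm_mul, hp, hz]
    have h3 : deriv g p * (z - p) = (g z - g p) -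
      ((g z - deriv g p * z) - (g p - deriv g p * p)) := by ring
    have h4 := norm_sub_le (g z - g p) ((g z - deriv g p * z) - (g p - deriv g p * p))
    rw [← h3, h2] at h4
    rw [hz] at h1
    linarith
  have hne : ∃ᶠ z in nhds p, g z ≠ g p := by
    have hgp := (hg.differentiableAt (Metric.isOpen_ball.mem_nhds
      (Metric.mem_ball_self ht))).hasDerivAt
    have := hgp.eventually_ne (c := g p) (by rw [← norm_pos_iff, hp]; exact hm)
    exact (this.frequently).filter_mono nhdsWithin_le_nhds
  have hdc : DiffContOnCl ℂ g (Metric.ball p (t/6)) := by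
    refine DifferentiableOn.diffContOnCl (hg.mono ?_)
    rw [closure_ball _ (by linarith)]; exact hsub
  have := hdc.ball_subset_image_closedBall (by linarith) hlow hne
  rw [show m * t / 24 = m * t / 12 / 2 by ring]
  exact this.trans (Set.image_mono hsub)

/-- Bloch-type derivative bound. -/
lemma bloch_bound {g : ℂ → ℂ} (hg : DifferentiableOn ℂ g (Metric.ball 0 1)) {ρ : ℝ} (hρ : 0 < ρ)
    (hno : ∀ c : ℂ, ∃ v ∈ Metric.ball c ρ, ∀ z ∈ Metric.ball (0:ℂ) 1, g z ≠ v) :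
    ∀ z ∈ Metric.ball (0:ℂ) 1, ‖deriv g z‖ ≤ 96 * ρ / (1 - ‖z‖) := by
  intro z₀ hz₀
  have hz₀' : ‖z₀‖ < 1 := by simpa using hz₀
  set r : ℝ := (1 + ‖z₀‖)/2 with hr
  have hr1 : r < 1 := by rw [hr]; linarith
  have hzr : ‖z₀‖ < r := by rw [hr]; linarith
  have hr0 : 0 < r := (norm_nonneg _).trans_lt hzr
  have hd' : DifferentiableOn ℂ (deriv g) (Metric.ball 0 1) := hg.deriv Metric.isOpen_ball
  have hcont : ContinuousOn (fun z => ‖deriv g z‖ * (r - ‖z‖)) (Metric.closedBall 0 r) := by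
    refine ((hd'.continuousOn.mono (Metric.closedBall_subset_ball hr1)).norm).mul ?_
    fun_prop
  obtain ⟨p, hp, hmax⟩ := (isCompact_closedBall (0:ℂ) r).exists_isMaxOn
    ⟨0, by simp [hr0.le]⟩ hcont
  have hmz : ‖deriv g z₀‖ * (r - ‖z₀‖) ≤ ‖deriv g p‖ * (r - ‖p‖) :=
    hmax (by simpa using hzr.le)
  have hgoal : ‖deriv g p‖ * (r - ‖p‖) ≤ 48 * ρ := by
    by_contra! hcon
    have hpr : ‖p‖ ≤ r := by simpa using hp
    have hpos : 0 < ‖deriv g p‖ * (r - ‖p‖) := by nlinarith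
    have hrp : 0 < r - ‖p‖ := by
      rcases (sub_nonneg.2 hpr).lt_or_eq with h | h
      · exact h
      · rw [← h] at hpos; simp at hpos
    have hm : 0 < ‖deriv g p‖ := by
      by_contra! h
      nlinarith
    have hsub : ∀ z ∈ Metric.ball p ((r - ‖p‖)/2), ‖z‖ < ‖p‖ + (r - ‖p‖)/2 := by
      intro z hz
      rw [mem_ball_iff_norm] at hz
      calc ‖z‖ = ‖p + (z - p)‖ := by ring_nf
        _ ≤ ‖p‖ + ‖z - p‖ := norm_add_le _ _
        _ < _ := by linarith
    have hsub2 : Metric.ball p ((r - ‖p‖)/2) ⊆ Metric.ball 0 1 := by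
      intro z hz
      have := hsub z hz
      rw [mem_ball_zero_iff]; linarith
    have hc := local_cover (g := g) (p := p) (t := (r - ‖p‖)/2) (by linarith) (hg.mono hsub2) hm rfl
      (by
        intro z hz
        have h1 := hsub z hz
        have h2 : ‖deriv g z‖ * (r - ‖z‖) ≤ ‖deriv g p‖ * (r - ‖p‖) :=
          hmax (by rw [mem_closedBall_zero_iff]; linarith)
        have h3 : (r - ‖p‖)/2 ≤ r - ‖z‖ := by linarith
        have h4 := mul_le_mul_of_nonneg_left h3 (norm_nonneg (deriv g z))
        by_contra! h5
        nlinarith)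
    obtain ⟨v, hv, hv2⟩ := hno (g p)
    have hv' : v ∈ Metric.ball (g p) (‖deriv g p‖ * ((r - ‖p‖)/2) / 24) := by
      refine Metric.ball_subset_ball ?_ hv
      linarith
    obtain ⟨z, hz, hzv⟩ := hc hv'
    exact hv2 z (hsub2 hz) hzv
  rw [le_div_iff₀ (by linarith)]
  have : r - ‖z₀‖ = (1 - ‖z₀‖)/2 := by rw [hr]; ring
  rw [this] at hmz
  linarith

lemma cosh_hits (x : ℝ) (hx : 0 ≤ x) : ∃ t ∈ Set.Icc x (x+1), ∃ n : ℤ, Real.cosh t ^ 2 = n := by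
  have h1 : Real.cosh x ^ 2 + 1 ≤ Real.cosh (x+1) ^ 2 := by
    rw [Real.cosh_add]
    have a1 : 1 ≤ Real.cosh x := Real.one_le_cosh x
    have a2 : 0 ≤ Real.sinh x := Real.sinh_nonneg_iff.2 hx
    have a3 : 0 ≤ Real.sinh 1 := Real.sinh_nonneg_iff.2 zero_le_one
    have a4 : 1 ≤ Real.sinh 1 := Real.self_le_sinh_iff.2 zero_le_one
    have a5 := Real.cosh_sq 1
    have a6 := Real.one_le_cosh 1
    have b1 : 2 ≤ Real.cosh 1 ^ 2 := by nlinarith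
    have b2 : 0 ≤ Real.sinh x * Real.sinh 1 := by positivity
    have b3 : (Real.cosh x * Real.cosh 1)^2 ≤
      (Real.cosh x * Real.cosh 1 + Real.sinh x * Real.sinh 1)^2 := by
      gcongr; linarith
    nlinarith [mul_le_mul_of_nonneg_left b1 (sq_nonneg (Real.cosh x))]
  have hiv := intermediate_value_Icc (show x ≤ x + 1 by linarith)
    (f := fun t => Real.cosh t ^ 2) (by fun_prop)
  obtain ⟨t, ht, h⟩ := hiv (show ((⌈Real.cosh x ^ 2⌉ : ℤ) : ℝ) ∈ _ from
    ⟨Int.le_ceil _, ((Int.ceil_lt_add_one _).le).trans h1⟩)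
  exact ⟨t, ht, _, h⟩

lemma cosh_hits_disc (c : ℂ) : ∃ v ∈ Metric.ball c 4, ∃ n : ℤ, cosh v ^ 2 = n := by
  obtain ⟨s, hs, n, hn⟩ : ∃ s : ℝ, |s - c.re| ≤ 1 ∧ ∃ n : ℤ, Real.cosh s ^ 2 = n := by
    rcases le_total 0 c.re with h | h
    · obtain ⟨t, ht, n, hn⟩ := cosh_hits c.re h
      exact ⟨t, by rw [abs_le]; constructor <;> linarith [ht.1, ht.2], n, hn⟩
    · obtain ⟨t, ht, n, hn⟩ := cosh_hits (-c.re) (by linarith)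
      exact ⟨-t, by rw [abs_le]; constructor <;> linarith [ht.1, ht.2], n, by rwa [Real.cosh_neg]⟩
  set m : ℤ := round (c.im / Real.pi) with hm
  have hpi := Real.pi_pos
  have hpi4 := Real.pi_lt_four
  have h2 : |c.im - m * Real.pi| ≤ 2 := by
    have := abs_sub_round (c.im / Real.pi)
    rw [← hm] at this
    have e : c.im - m * Real.pi = (c.im / Real.pi - m) * Real.pi := by field_simp
    rw [e, abs_mul, abs_of_pos hpi]
    nlinarith
  refine ⟨(s : ℂ) + (m * Real.pi : ℝ) * I, ?_, n, ?_⟩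
  · rw [mem_ball_iff_norm]
    refine (norm_le_abs_re_add_abs_im _).trans_lt ?_
    simp
    simp only [← abs_neg (c.im - _), neg_sub] at h2
    linarith
  · have hs0 : sin ((m * Real.pi : ℝ) : ℂ) = 0 := by
      rw [← ofReal_sin, Real.sin_int_mul_pi]; simp
    have hc1 : cos ((m * Real.pi : ℝ) : ℂ) ^ 2 = 1 := by
      have := sin_sq_add_cos_sq ((m * Real.pi : ℝ) : ℂ)
      rw [hs0] at this; simpa using this
    rw [cosh_add, cosh_mul_I, sinh_mul_I, hs0]
    simp only [zero_mul, mul_zero, add_zero, mul_pow, hc1, mul_one]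
    rw [← ofReal_cosh, ← ofReal_pow, hn]; simp

lemma radial_log {g : ℂ → ℂ} (hg : DifferentiableOn ℂ g (Metric.ball 0 1)) {M : ℝ}
    (hM : ∀ z ∈ Metric.ball (0:ℂ) 1, ‖deriv g z‖ ≤ M / (1 - ‖z‖)) :
    ∀ z ∈ Metric.ball (0:ℂ) 1, ‖g z‖ ≤ ‖g 0‖ - M * Real.log (1 - ‖z‖) := by
  intro z hz
  have hz' : ‖z‖ < 1 := by simpa using hz
  have hmem : ∀ t ∈ Set.Icc (0:ℝ) 1, (t:ℂ) * z ∈ Metric.ball (0:ℂ) 1 := by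
    intro t ht
    rw [mem_ball_zero_iff, norm_mul, norm_real, Real.norm_of_nonneg ht.1]
    nlinarith [ht.2, norm_nonneg z]
  have hpos : ∀ t ∈ Set.Icc (0:ℝ) 1, 0 < 1 - t * ‖z‖ := by
    intro t ht
    nlinarith [ht.2, norm_nonneg z]
  have hder : ∀ t ∈ Set.Icc (0:ℝ) 1,
      HasDerivAt (fun t : ℝ => g ((t:ℂ) * z)) (deriv g ((t:ℂ) * z) * z) t := by
    intro t ht
    have h1 := (hg.differentiableAt (Metric.isOpen_ball.mem_nhds (hmem t ht))).hasDerivAt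
    have h2 : HasDerivAt (fun t : ℂ => t * z) z (t:ℂ) := by
      simpa using (hasDerivAt_id (t:ℂ)).mul_const z
    exact (h1.comp (t:ℂ) h2).comp_ofReal
  have hB : ∀ t ∈ Set.Icc (0:ℝ) 1,
      HasDerivAt (fun t : ℝ => ‖g 0‖ - M * Real.log (1 - t * ‖z‖))
        (M / (1 - t * ‖z‖) * ‖z‖) t := by
    intro t ht
    have h0 : HasDerivAt (fun t : ℝ => 1 - t * ‖z‖) (-‖z‖) t := by
      simpa using ((hasDerivAt_id t).mul_const ‖z‖).const_sub 1
    have h1 := ((h0.log (hpos t ht).ne').const_mul M).const_sub ‖g 0‖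
    refine h1.congr_deriv ?_
    ring
  have := image_norm_le_of_norm_deriv_right_le_deriv_boundary'
    (f := fun t : ℝ => g ((t:ℂ) * z)) (a := 0) (b := 1)
    (B := fun t : ℝ => ‖g 0‖ - M * Real.log (1 - t * ‖z‖))
    (fun t ht => (hder t ht).continuousAt.continuousWithinAt)
    (fun t ht => (hder t (Set.Ico_subset_Icc_self ht)).hasDerivWithinAt)
    (by simp)
    (fun t ht => (hB t ht).continuousAt.continuousWithinAt)
    (fun t ht => (hB t (Set.Ico_subset_Icc_self ht)).hasDerivWithinAt)
    (by
      intro t ht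
      have ht' := Set.Ico_subset_Icc_self ht
      rw [norm_mul]
      have := hM _ (hmem t ht')
      rw [norm_mul, norm_real, Real.norm_of_nonneg ht.1] at this
      gcongr)
    (Set.right_mem_Icc.2 zero_le_one)
  simpa using this

lemma norm_cosh_le' (z : ℂ) : ‖cosh z‖ ≤ Real.exp ‖z‖ := by
  rw [cosh, norm_div]
  have h1 := norm_exp_le_exp_norm z
  have h2 := norm_exp_le_exp_norm (-z)
  rw [norm_neg] at h2
  have := norm_add_le (exp z) (exp (-z))
  simp; linarith

lemma norm_sinh_le' (z : ℂ) : ‖sinh z‖ ≤ Real.exp ‖z‖ := by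
  rw [sinh, norm_div]
  have h1 := norm_exp_le_exp_norm z
  have h2 := norm_exp_le_exp_norm (-z)
  rw [norm_neg] at h2
  have := norm_sub_le (exp z) (exp (-z))
  simp; linarith

/-- Landau / Schottky type bound on the disc. -/
lemma landau_disc {f : ℂ → ℂ} (hf : DifferentiableOn ℂ f (Metric.ball 0 1))
    (h0 : ∀ z ∈ Metric.ball (0:ℂ) 1, f z ≠ 0) (h1 : ∀ z ∈ Metric.ball (0:ℂ) 1, f z ≠ 1) :
    ∃ C : ℝ, 0 < C ∧ ∃ K : ℕ, ∀ z ∈ Metric.ball (0:ℂ) 1,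
      ‖deriv f z / f z‖ ≤ C * (1 / (1 - ‖z‖)) ^ K := by
  obtain ⟨l, hl, hle⟩ := disc_log hf h0
  set a : ℂ → ℂ := fun z => l z / (2 * Real.pi * I) with ha
  have h2pi : (2 * Real.pi * I : ℂ) ≠ 0 := by simp [Real.pi_ne_zero]
  have hdl : DifferentiableOn ℂ l (Metric.ball 0 1) :=
    fun z hz => (hl z hz).differentiableAt.differentiableWithinAt
  have hda : DifferentiableOn ℂ a (Metric.ball 0 1) := hdl.div_const _
  have haint : ∀ z ∈ Metric.ball (0:ℂ) 1, ∀ n : ℤ, a z ≠ n := by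
    intro z hz n hn
    apply h1 z hz
    rw [← hle z hz, exp_eq_one_iff]
    refine ⟨n, ?_⟩
    rw [← hn, ha]; field_simp
  obtain ⟨la, hla, hlae⟩ := disc_log hda (fun z hz => by simpa using haint z hz 0)
  obtain ⟨lb, hlb, hlbe⟩ := disc_log (hda.sub_const 1)
    (fun z hz => by simpa [sub_eq_zero] using haint z hz 1)
  set u : ℂ → ℂ := fun z => exp (la z / 2) with hu
  set v : ℂ → ℂ := fun z => exp (lb z / 2) with hv
  have hdu : DifferentiableOn ℂ u (Metric.ball 0 1) := by
    have : DifferentiableOn ℂ la (Metric.ball 0 1) :=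
      fun z hz => (hla z hz).differentiableAt.differentiableWithinAt
    exact (this.div_const 2).cexp
  have hdv : DifferentiableOn ℂ v (Metric.ball 0 1) := by
    have : DifferentiableOn ℂ lb (Metric.ball 0 1) :=
      fun z hz => (hlb z hz).differentiableAt.differentiableWithinAt
    exact (this.div_const 2).cexp
  have huu : ∀ z ∈ Metric.ball (0:ℂ) 1, u z ^ 2 = a z := by
    intro z hz
    rw [← hlae z hz, hu, ← exp_nat_mul]; congr 1; push_cast; ring
  have hvv : ∀ z ∈ Metric.ball (0:ℂ) 1, v z ^ 2 = a z - 1 := by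
    intro z hz
    rw [← hlbe z hz, hv, ← exp_nat_mul]; congr 1; push_cast; ring
  have huv : ∀ z ∈ Metric.ball (0:ℂ) 1, (u z - v z) * (u z + v z) = 1 := by
    intro z hz
    linear_combination huu z hz - hvv z hz
  obtain ⟨g, hg, hge⟩ := disc_log (hdu.sub hdv)
    (fun z hz h => by
      have := huv z hz
      have h' : u z - v z = 0 := h
      rw [h'] at this; simp at this)
  have hdg : DifferentiableOn ℂ g (Metric.ball 0 1) :=
    fun z hz => (hg z hz).differentiableAt.differentiableWithinAt
  have hcosh : ∀ z ∈ Metric.ball (0:ℂ) 1, cosh (g z) ^ 2 = a z := by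
    intro z hz
    have e1 : exp (g z) = u z - v z := hge z hz
    have e2 : exp (- g z) = u z + v z := by
      rw [exp_neg, e1]
      exact inv_eq_of_mul_eq_one_right (huv z hz)
    rw [cosh, e1, e2, ← huu z hz]; ring
  have hbl := bloch_bound hdg (ρ := 4) (by norm_num) (by
    intro c
    obtain ⟨w, hw, n, hn⟩ := cosh_hits_disc c
    refine ⟨w, hw, fun z hz h => haint z hz n ?_⟩
    rw [← hcosh z hz, h, hn])
  have hrad := radial_log hdg hbl
  refine ⟨4 * Real.pi * Real.exp (2 * ‖g 0‖) * 384, by have := Real.pi_pos; positivity, 769, ?_⟩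
  intro z hz
  have hz' : ‖z‖ < 1 := by simpa using hz
  have hpos : 0 < 1 - ‖z‖ := by linarith
  have hder : deriv f z / f z = 2 * Real.pi * I * (2 * cosh (g z) * (sinh (g z) * deriv g z)) := by
    have e1 : HasDerivAt l (2 * Real.pi * I * (2 * cosh (g z) * (sinh (g z) * deriv g z))) z := by
      have hgz := (hdg.differentiableAt (Metric.isOpen_ball.mem_nhds hz)).hasDerivAt
      have h3 := ((hgz.ccosh.pow 2).const_mul (2 * Real.pi * I : ℂ))
      have h4 : l =ᶠ[nhds z] fun z => (2 * Real.pi * I : ℂ) * cosh (g z) ^ 2 := by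
        filter_upwards [Metric.isOpen_ball.mem_nhds hz] with w hw
        rw [hcosh w hw, ha]; field_simp
      have h5 := h3.congr_of_eventuallyEq h4
      refine h5.congr_deriv ?_
      norm_num
    exact (hl z hz).unique e1
  have hb2 : ‖g z‖ ≤ ‖g 0‖ - 384 * Real.log (1 - ‖z‖) := by
    have := hrad z hz; linarith
  have hexp : Real.exp ‖g z‖ * Real.exp ‖g z‖ ≤
      Real.exp (2 * ‖g 0‖) * (1 / (1 - ‖z‖)) ^ 768 := by
    rw [← Real.exp_add]
    have e : (1 / (1 - ‖z‖)) ^ 768 = Real.exp (-(768 * Real.log (1 - ‖z‖))) := by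
      rw [Real.exp_neg, one_div, inv_pow]
      congr 1
      rw [show (768:ℝ) = ((768:ℕ):ℝ) by norm_num, Real.exp_nat_mul, Real.exp_log hpos]
    rw [e, ← Real.exp_add]
    apply Real.exp_le_exp.2
    linarith
  rw [hder]
  have hpi : ‖(2 * Real.pi * I : ℂ)‖ = 2 * Real.pi := by
    simp [abs_of_pos Real.pi_pos]
  rw [norm_mul, hpi, norm_mul, norm_mul, norm_mul]
  have hc := norm_cosh_le' (g z)
  have hs := norm_sinh_le' (g z)
  have hbz := hbl z hz
  have hpi0 := Real.pi_pos
  calc 2 * Real.pi * (‖(2:ℂ)‖ * ‖cosh (g z)‖ * (‖sinh (g z)‖ * ‖deriv g z‖))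
      ≤ 2 * Real.pi * (2 * Real.exp ‖g z‖ * (Real.exp ‖g z‖ * (96 * 4 / (1 - ‖z‖)))) := by
        have : ‖(2:ℂ)‖ = 2 := by simp
        rw [this]
        gcongr
    _ = 4 * Real.pi * (Real.exp ‖g z‖ * Real.exp ‖g z‖) * (384 * (1 / (1 - ‖z‖))) := by ring
    _ ≤ 4 * Real.pi * (Real.exp (2 * ‖g 0‖) * (1 / (1 - ‖z‖)) ^ 768) * (384 * (1 / (1 - ‖z‖))) := by
        have : 0 < 1 / (1 - ‖z‖) := by positivity
        gcongr
    _ = _ := by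
        generalize 1 / (1 - ‖z‖) = x
        rw [pow_succ x 768]; ring

/-- Harnack-type gradient bound. -/
lemma pos_disc {e : ℂ → ℂ} (he : DifferentiableOn ℂ e (Metric.ball 0 1))
    (h1 : ∀ z ∈ Metric.ball (0:ℂ) 1, 1 < ‖e z‖) :
    ∀ z ∈ Metric.ball (0:ℂ) 1,
      ‖deriv e z / e z‖ ≤ 8 * Real.log ‖e 0‖ * (1 / (1 - ‖z‖)) ^ 2 := by
  have m0 : (0:ℂ) ∈ Metric.ball (0:ℂ) 1 := by simp
  obtain ⟨l, hl, hle⟩ := disc_log he (fun z hz h => by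
    have := h1 z hz; rw [h] at this; simp at this; linarith)
  have hre : ∀ z ∈ Metric.ball (0:ℂ) 1, (l z).re = Real.log ‖e z‖ := by
    intro z hz
    rw [← hle z hz, norm_exp, Real.log_exp]
  set a := Real.log ‖e 0‖ with ha
  have hapos : 0 < a := Real.log_pos (h1 0 m0)
  have hdl : DifferentiableOn ℂ l (Metric.ball 0 1) :=
    fun z hz => (hl z hz).differentiableAt.differentiableWithinAt
  have hdf : DifferentiableOn ℂ (fun z => l 0 - l z) (Metric.ball 0 1) := hdl.const_sub _
  have hbc : ∀ z ∈ Metric.ball (0:ℂ) 1, ‖l 0 - l z‖ ≤ 2 * a / (1 - ‖z‖) := by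
    intro z hz
    have hz' : ‖z‖ < 1 := by simpa using hz
    have := Complex.borelCaratheodory_zero (f := fun z => l 0 - l z) hapos hdf (by
      intro w hw
      have e1 := hre w hw
      have e2 := Real.log_pos (h1 w hw)
      have e3 := hre 0 m0
      change (l 0 - l w).re ≤ a
      rw [sub_re, e3, e1]; linarith) one_pos hz (by simp)
    refine this.trans ?_
    have : 0 < 1 - ‖z‖ := by linarith
    apply div_le_div_of_nonneg_right _ this.le
    nlinarith
  intro z hz
  have hz' : ‖z‖ < 1 := by simpa using hz
  have hpos : 0 < 1 - ‖z‖ := by linarith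
  have hsub : ∀ w ∈ Metric.closedBall z ((1 - ‖z‖)/2), ‖w‖ ≤ ‖z‖ + (1 - ‖z‖)/2 := by
    intro w hw
    rw [mem_closedBall_iff_norm] at hw
    calc ‖w‖ = ‖z + (w - z)‖ := by ring_nf
      _ ≤ ‖z‖ + ‖w - z‖ := norm_add_le _ _
      _ ≤ _ := by linarith
  have hsub2 : Metric.closedBall z ((1 - ‖z‖)/2) ⊆ Metric.ball 0 1 := by
    intro w hw
    have := hsub w hw
    rw [mem_ball_zero_iff]; linarith
  have hC := Complex.norm_deriv_le_of_forall_mem_sphere_norm_le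
    (f := fun z => l 0 - l z) (c := z) (R := (1 - ‖z‖)/2) (C := 4 * a / (1 - ‖z‖)) (by linarith)
    (by
      refine DifferentiableOn.diffContOnCl (hdf.mono ?_)
      rw [closure_ball _ (by linarith)]; exact hsub2)
    (by
      intro w hw
      have hw := Metric.sphere_subset_closedBall hw
      have h2 := hsub w hw
      refine (hbc w (hsub2 hw)).trans ?_
      rw [show 4 * a / (1 - ‖z‖) = 2 * a / ((1 - ‖z‖)/2) by field_simp; norm_num]
      apply div_le_div_of_nonneg_left (by linarith) (by linarith) (by linarith))
  rw [((hl z hz).const_sub (l 0)).deriv, norm_neg] at hC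
  refine hC.trans (le_of_eq ?_)
  field_simp
  norm_num

/-- The Cayley transform from the disc to the upper half plane. -/
noncomputable def cay (ζ : ℂ) : ℂ := I * (1 + ζ) / (1 - ζ)

lemma cay_ne {ζ : ℂ} (h : ‖ζ‖ < 1) : 1 - ζ ≠ 0 := by
  intro h'
  rw [sub_eq_zero] at h'
  rw [← h'] at h; simp at h

lemma cay_im_pos {ζ : ℂ} (h : ‖ζ‖ < 1) : 0 < (cay ζ).im := by
  have hn := normSq_pos.2 (cay_ne h)
  have h2 : ζ.re ^ 2 + ζ.im ^ 2 < 1 := by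
    have := Complex.sq_norm ζ
    rw [normSq_apply] at this
    nlinarith [norm_nonneg ζ]
  have : (cay ζ).im = (1 - (ζ.re ^ 2 + ζ.im ^ 2)) / normSq (1 - ζ) := by
    rw [cay, div_im]
    simp
    field_simp
    ring
  rw [this]
  apply div_pos _ hn
  linarith

lemma cay_hasDerivAt {ζ : ℂ} (h : ‖ζ‖ < 1) : HasDerivAt cay (2 * I / (1 - ζ) ^ 2) ζ := by
  have hn := cay_ne h
  have h1 : HasDerivAt (fun ζ : ℂ => I * (1 + ζ)) I ζ := by
    simpa using ((hasDerivAt_id ζ).const_add 1).const_mul I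
  have h2 : HasDerivAt (fun ζ : ℂ => 1 - ζ) (-1) ζ := by
    simpa using (hasDerivAt_id ζ).const_sub 1
  refine (h1.fun_div h2 hn).congr_deriv ?_
  field_simp
  ring

lemma cay_data {z : ℂ} (hz : 0 < z.im) : ∃ ζ ∈ Metric.ball (0:ℂ) 1, cay ζ = z ∧
    ‖deriv cay ζ‖ = ‖z + I‖ ^ 2 / 2 ∧ 1 / (1 - ‖ζ‖) ≤ ‖z + I‖ ^ 2 / (2 * z.im) := by
  have hne : z + I ≠ 0 := by
    intro h
    have := congrArg Complex.im h
    simp at this; linarith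
  have hq : 0 < ‖z + I‖ := norm_pos_iff.2 hne
  have hpq : ‖z - I‖ ^ 2 = ‖z + I‖ ^ 2 - 4 * z.im := by
    rw [Complex.sq_norm, Complex.sq_norm, normSq_apply, normSq_apply]
    simp; ring
  have hlt : ‖z - I‖ < ‖z + I‖ := by
    apply lt_of_pow_lt_pow_left₀ 2 hq.le
    rw [hpq]; linarith
  have hnorm : ‖(z - I) / (z + I)‖ < 1 := by
    rw [norm_div, div_lt_one hq]; exact hlt
  have h1 : 1 - (z - I) / (z + I) = 2 * I / (z + I) := by field_simp; ring
  refine ⟨(z - I) / (z + I), by simpa using hnorm, ?_, ?_, ?_⟩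
  · rw [cay, h1]
    have := I_ne_zero
    field_simp
    try ring
  · rw [(cay_hasDerivAt hnorm).deriv, h1]
    simp only [norm_div, norm_mul, norm_pow, norm_I]
    simp
    field_simp
  · rw [norm_div]
    have hp0 := norm_nonneg (z - I)
    have h3 : 0 < 1 - ‖z - I‖ / ‖z + I‖ := by
      rw [sub_pos, div_lt_one hq]; exact hlt
    rw [div_le_div_iff₀ h3 (by linarith)]
    have : ‖z + I‖ ^ 2 * (1 - ‖z - I‖ / ‖z + I‖) = ‖z + I‖ * (‖z + I‖ - ‖z - I‖) := by
      field_simp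
    rw [this]
    nlinarith

lemma one_le_norm_add_I {z : ℂ} (hz : 0 < z.im) : 1 ≤ ‖z + I‖ := by
  have := abs_im_le_norm (z + I)
  simp at this
  rw [abs_of_pos (by linarith)] at this
  linarith

lemma im_le_norm_add_I {z : ℂ} (hz : 0 < z.im) : z.im ≤ ‖z + I‖ := by
  have := abs_im_le_norm (z + I)
  simp at this
  rw [abs_of_pos (by linarith)] at this
  linarith

lemma landau_half {F : ℂ → ℂ} (hF : ∀ z : ℂ, 0 < z.im → DifferentiableAt ℂ F z)
    (h0 : ∀ z : ℂ, 0 < z.im → F z ≠ 0) (h1 : ∀ z : ℂ, 0 < z.im → F z ≠ 1) :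
    ∃ C : ℝ, 0 < C ∧ ∃ K : ℕ, ∀ z : ℂ, 0 < z.im →
      ‖logDeriv F z‖ ≤ C * (‖z + I‖ ^ 2 / z.im) ^ K := by
  have hm : ∀ ζ ∈ Metric.ball (0:ℂ) 1, ‖ζ‖ < 1 := by intro ζ h; simpa using h
  obtain ⟨C, hC, K, h⟩ := landau_disc (f := F ∘ cay)
    (fun ζ hζ => ((hF _ (cay_im_pos (hm ζ hζ))).comp ζ
      (cay_hasDerivAt (hm ζ hζ)).differentiableAt).differentiableWithinAt)
    (fun ζ hζ => h0 _ (cay_im_pos (hm ζ hζ))) (fun ζ hζ => h1 _ (cay_im_pos (hm ζ hζ)))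
  refine ⟨2 * C, by positivity, K, ?_⟩
  intro z hz
  obtain ⟨ζ, hζ, hcz, hd, hr⟩ := cay_data hz
  have hb := h ζ hζ
  have h1 : 0 < 1 - ‖ζ‖ := by linarith [hm ζ hζ]
  rw [← logDeriv_apply, logDeriv_comp (by rw [hcz]; exact hF z hz)
    (cay_hasDerivAt (hm ζ hζ)).differentiableAt, hcz, norm_mul, hd] at hb
  have hq := one_le_norm_add_I hz
  have hr2 : 1 / (1 - ‖ζ‖) ≤ ‖z + I‖ ^ 2 / z.im := by
    refine hr.trans ?_
    apply div_le_div_of_nonneg_left (by positivity) hz (by linarith)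
  have hb2 : C * (1 / (1 - ‖ζ‖)) ^ K ≤ C * (‖z + I‖ ^ 2 / z.im) ^ K := by gcongr
  have : 1 ≤ ‖z + I‖ ^ 2 := one_le_pow₀ hq
  nlinarith [norm_nonneg (logDeriv F z)]

lemma pos_half {e : ℂ → ℂ} (he : ∀ z : ℂ, 0 < z.im → DifferentiableAt ℂ e z)
    (h1 : ∀ z : ℂ, 0 < z.im → 1 < ‖e z‖) :
    ∀ z : ℂ, 0 < z.im →
      ‖logDeriv e z‖ ≤ 4 * Real.log ‖e I‖ * (‖z + I‖ ^ 2 / z.im ^ 2) := by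
  have hm : ∀ ζ ∈ Metric.ball (0:ℂ) 1, ‖ζ‖ < 1 := by intro ζ h; simpa using h
  have h := pos_disc (e := e ∘ cay)
    (fun ζ hζ => ((he _ (cay_im_pos (hm ζ hζ))).comp ζ
      (cay_hasDerivAt (hm ζ hζ)).differentiableAt).differentiableWithinAt)
    (fun ζ hζ => h1 _ (cay_im_pos (hm ζ hζ)))
  intro z hz
  obtain ⟨ζ, hζ, hcz, hd, hr⟩ := cay_data hz
  have hb := h ζ hζ
  have h2 : 0 < 1 - ‖ζ‖ := by linarith [hm ζ hζ]
  have hc0 : cay 0 = I := by simp [cay]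
  rw [← logDeriv_apply, logDeriv_comp (by rw [hcz]; exact he z hz)
    (cay_hasDerivAt (hm ζ hζ)).differentiableAt, hcz, norm_mul, hd] at hb
  simp only [Function.comp_apply, hc0] at hb
  have ha : 0 < Real.log ‖e I‖ := Real.log_pos (h1 I (by simp))
  have hb2 : 8 * Real.log ‖e I‖ * (1 / (1 - ‖ζ‖)) ^ 2 ≤
    8 * Real.log ‖e I‖ * (‖z + I‖ ^ 2 / (2 * z.im)) ^ 2 := by gcongr
  have hq : 0 < ‖z + I‖ := by linarith [one_le_norm_add_I hz]
  have hb3 := hb.trans hb2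
  have e : 8 * Real.log ‖e I‖ * (‖z + I‖ ^ 2 / (2 * z.im)) ^ 2 =
    (4 * Real.log ‖e I‖ * (‖z + I‖ ^ 2 / z.im ^ 2)) * (‖z + I‖ ^ 2 / 2) := by
    field_simp
    norm_num
  rw [e] at hb3
  exact le_of_mul_le_mul_right hb3 (by positivity)

/-- The sharp logarithmic-derivative bound from a crude lower bound. -/
lemma logDeriv_bound {E : ℂ → ℂ} (hE : Differentiable ℂ E) {c : ℝ} (hc : 0 < c) {K : ℕ}
    (h : ∀ z : ℂ, 0 < z.im → c ≤ ‖E z‖ * (‖z + I‖ ^ 2 / z.im) ^ K) :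
    ∃ C : ℝ, 0 < C ∧ ∀ z : ℂ, 0 < z.im →
      ‖logDeriv E z‖ ≤ C * ((1 + 1 / z.im) * (‖z + I‖ ^ 2 / z.im ^ 2)) := by
  obtain ⟨M, hM⟩ := (isCompact_closedBall I 1).exists_bound_of_continuousOn
    (f := E) hE.continuous.continuousOn
  have hE0 : ∀ z : ℂ, 0 < z.im → E z ≠ 0 := by
    intro z hz h0
    have := h z hz
    rw [h0] at this; simp at this; linarith
  have hM0 : 0 < M := (norm_pos_iff.2 (hE0 I (by simp))).trans_le (hM I (by simp))
  set N : ℝ := M * 3 ^ (2 * K) * (2 / c) with hN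
  have hN0 : 0 < N := by positivity
  refine ⟨2 * K + 16 * (|Real.log N| + 2 * K) + 1, by positivity, ?_⟩
  intro z hz
  set δ : ℝ := min z.im 1 / 2 with hδ
  have hδ0 : 0 < δ := by have : 0 < min z.im 1 := lt_min hz one_pos
                         linarith
  have hδ1 : δ ≤ z.im / 2 := by have := min_le_left z.im 1; linarith
  have hδ2 : δ ≤ 1 / 2 := by have := min_le_right z.im 1; linarith
  have hδ3 : 1 / δ ≤ 2 * (1 + 1 / z.im) := by
    rw [hδ]
    rcases min_cases z.im 1 with ⟨h1, _⟩ | ⟨h1, _⟩ <;> rw [h1]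
    · rw [one_div_div]
      have : 2 / z.im = 2 * (1 / z.im) := by ring
      linarith
    · have : 0 < 1 / z.im := by positivity
      norm_num; linarith
  clear_value δ
  set D : ℂ := ((2 / (c * δ ^ K) : ℝ) : ℂ) with hD
  have hDpos : 0 < 2 / (c * δ ^ K) := by positivity
  have hDn : ‖D‖ = 2 / (c * δ ^ K) := by rw [hD, norm_real, Real.norm_of_nonneg hDpos.le]
  have hD0 : D ≠ 0 := by rw [← norm_pos_iff, hDn]; exact hDpos
  set e : ℂ → ℂ := fun u => (E (u + δ * I) * (u + δ * I + I) ^ (2 * K)) * D with he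
  have hgt : ∀ u : ℂ, 0 < u.im → 1 < ‖e u‖ := by
    intro u hu
    have him : (u + δ * I).im = u.im + δ := by simp
    have h1 := h (u + δ * I) (by rw [him]; linarith)
    rw [him] at h1
    rw [he]
    simp only [norm_mul, norm_pow, hDn]
    set q := ‖u + δ * I + I‖
    have h2 : ‖E (u + δ * I)‖ * (q ^ 2 / (u.im + δ)) ^ K ≤ ‖E (u + δ * I)‖ * (q ^ 2 / δ) ^ K := by
      gcongr
      linarith
    have h3 : ‖E (u + δ * I)‖ * q ^ (2 * K) * (2 / (c * δ ^ K)) =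
      2 / c * (‖E (u + δ * I)‖ * (q ^ 2 / δ) ^ K) := by
      rw [div_pow, pow_mul]; field_simp
    rw [h3]
    have h4 : 2 / c * c ≤ 2 / c * (‖E (u + δ * I)‖ * (q ^ 2 / δ) ^ K) := by
      gcongr
      exact h1.trans h2
    have : 2 / c * c = 2 := by field_simp
    linarith
  have hde : Differentiable ℂ e := by rw [he]; fun_prop
  have hlog : Real.log ‖e I‖ ≤ |Real.log N| + K * (1 / δ) := by
    have h1 : ‖e I‖ ≤ N * (1 / δ) ^ K := by
      rw [he]
      simp only [norm_mul, norm_pow, hDn]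
      have h2 : ‖E (I + δ * I)‖ ≤ M := by
        apply hM
        rw [mem_closedBall_iff_norm]
        simp [abs_of_pos hδ0]; linarith
      have h3 : ‖I + δ * I + I‖ ≤ 3 := by
        have : I + δ * I + I = ((2 + δ : ℝ) : ℂ) * I := by push_cast; ring
        rw [this, norm_mul, norm_real, norm_I, Real.norm_of_nonneg (by linarith)]
        linarith
      calc ‖E (I + δ * I)‖ * ‖I + δ * I + I‖ ^ (2 * K) * (2 / (c * δ ^ K))
          ≤ M * 3 ^ (2 * K) * (2 / (c * δ ^ K)) := by gcongr
        _ = _ := by rw [hN, div_pow, one_pow]; field_simp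
    have h0 : 0 < ‖e I‖ := by linarith [hgt I (by simp)]
    have h2 := Real.log_le_log h0 h1
    rw [Real.log_mul hN0.ne' (by positivity), Real.log_pow] at h2
    have h3 := Real.log_le_self (show 0 ≤ 1 / δ by positivity)
    have h4 := mul_le_mul_of_nonneg_left h3 (Nat.cast_nonneg (α := ℝ) K)
    linarith [le_abs_self (Real.log N)]
  have him : (z - δ * I).im = z.im - δ := by simp
  have hp := pos_half (e := e) (fun u _ => hde u) hgt (z - δ * I) (by rw [him]; linarith)
  have hzI : z + I ≠ 0 := by
    rw [← norm_pos_iff]; linarith [one_le_norm_add_I hz]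
  have hld : logDeriv e (z - δ * I) = logDeriv E z + (2 * K : ℕ) * (1 / (z + I)) := by
    have s1 : z - δ * I + δ * I = z := by ring
    rw [he, logDeriv_mul_const _ _ hD0, logDeriv_mul]
    · have c1 := logDeriv_comp (f := E) (g := fun u => u + δ * I) (x := z - δ * I)
        (hE _) (by fun_prop)
      have c2 := logDeriv_fun_pow (f := fun u => u + δ * I + I) (x := z - δ * I)
        (by fun_prop) (2 * K)
      rw [c2]
      have c3 : logDeriv (fun u : ℂ => u + δ * I + I) (z - δ * I) = 1 / (z + I) := by
        rw [logDeriv_apply]; simp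
      rw [c3]
      congr 1
      rw [Function.comp_def] at c1
      rw [c1, s1]; simp
    · rw [s1]; exact hE0 z hz
    · rw [s1]; exact pow_ne_zero _ hzI
    · fun_prop
    · fun_prop
  rw [hld, him] at hp
  set q := ‖z + I‖ with hq
  set y := z.im with hy
  have hq1 : 1 ≤ q := one_le_norm_add_I hz
  have hqy : y ≤ q := im_le_norm_add_I hz
  have hqq : ‖z - δ * I + I‖ ≤ q := by
    apply le_of_sq_le_sq _ (by linarith)
    rw [hq, Complex.sq_norm, Complex.sq_norm, normSq_apply, normSq_apply]
    simp
    nlinarith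
  have hratio : ‖z - δ * I + I‖ ^ 2 / (y - δ) ^ 2 ≤ 4 * (q ^ 2 / y ^ 2) := by
    calc ‖z - δ * I + I‖ ^ 2 / (y - δ) ^ 2 ≤ q ^ 2 / (y / 2) ^ 2 := by
          gcongr
          linarith
      _ = _ := by field_simp; norm_num
  have hy1 : 1 ≤ 1 + 1 / y := by have : 0 < 1 / y := by positivity
                                 linarith
  have hqy2 : 1 ≤ q ^ 2 / y ^ 2 := by
    rw [one_le_div (by positivity)]; gcongr
  have hpp : ‖logDeriv E z + (2 * K : ℕ) * (1 / (z + I))‖ ≤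
      4 * (|Real.log N| + K * (2 * (1 + 1 / y))) * (4 * (q ^ 2 / y ^ 2)) := by
    refine hp.trans ?_
    have : Real.log ‖e I‖ ≤ |Real.log N| + K * (2 * (1 + 1 / y)) := by
      refine hlog.trans ?_
      gcongr
    gcongr
  have hk : ‖((2 * K : ℕ) : ℂ) * (1 / (z + I))‖ ≤ 2 * K := by
    rw [norm_mul, norm_div, norm_one, Complex.norm_natCast, ← hq]
    push_cast
    have : 1 / q ≤ 1 := by rw [div_le_one (by linarith)]; exact hq1
    have : (0:ℝ) ≤ K := Nat.cast_nonneg K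
    nlinarith
  have htri : ‖logDeriv E z‖ ≤ ‖logDeriv E z + (2 * K : ℕ) * (1 / (z + I))‖ +
      ‖((2 * K : ℕ) : ℂ) * (1 / (z + I))‖ := by
    have := norm_sub_le (logDeriv E z + (2 * K : ℕ) * (1 / (z + I))) ((2 * K : ℕ) * (1 / (z + I)))
    simpa using this
  have hL := abs_nonneg (Real.log N)
  have hK : (0:ℝ) ≤ K := Nat.cast_nonneg K
  generalize |Real.log N| = L at *
  generalize q ^ 2 / y ^ 2 = X at *
  generalize 1 + 1 / y = Y at *
  have hX : 0 ≤ X := by linarith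
  have hXY : 1 ≤ Y * X := one_le_mul_of_one_le_of_one_le hy1 hqy2
  have hXY2 : X ≤ Y * X := le_mul_of_one_le_left hX hy1
  nlinarith [mul_nonneg hL (sub_nonneg.2 hXY2), mul_nonneg hK (sub_nonneg.2 hXY)]

lemma pair_bound {w₁ w₂ w₃ : ℂ → ℂ} (h₁ : Differentiable ℂ w₁) (h₂ : Differentiable ℂ w₂)
    {W α β γ : ℂ} (hW0 : W ≠ 0) (hW : ∀ z, w₁ z * deriv w₂ z - w₂ z * deriv w₁ z = W)
    (hα : α ≠ 0) (hβ : β ≠ 0) (hγ : γ ≠ 0)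
    (hrel : ∀ z, α * w₁ z + β * w₂ z + γ * w₃ z = 0)
    (n₁ : ∀ z : ℂ, 0 < z.im → w₁ z ≠ 0) (n₂ : ∀ z : ℂ, 0 < z.im → w₂ z ≠ 0)
    (n₃ : ∀ z : ℂ, 0 < z.im → w₃ z ≠ 0) :
    ∃ C : ℝ, 0 < C ∧ ∀ z : ℂ, 0 < z.im →
      ‖logDeriv w₁ z + logDeriv w₂ z‖ ≤ C * ((1 + 1 / z.im) * (‖z + I‖ ^ 2 / z.im ^ 2)) := by
  obtain ⟨C, hC, K, hK⟩ := landau_half (F := fun z => (-α / β) * (w₁ z / w₂ z))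
    (fun z hz => ((h₁ z).div (h₂ z) (n₂ z hz)).const_mul _)
    (fun z hz => mul_ne_zero (div_ne_zero (neg_ne_zero.2 hα) hβ)
      (div_ne_zero (n₁ z hz) (n₂ z hz)))
    (by
      intro z hz h
      have hn := n₂ z hz
      field_simp at h
      have h3 : γ * w₃ z = 0 := by linear_combination hrel z + h
      exact (mul_ne_zero hγ (n₃ z hz)) h3)
  obtain ⟨C', hC', h⟩ := logDeriv_bound (E := fun z => w₁ z * w₂ z) (h₁.mul h₂)
    (c := ‖W‖ / C) (div_pos (norm_pos_iff.2 hW0) hC) (K := K) (by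
      intro z hz
      have hb := hK z hz
      have hn1 := n₁ z hz
      have hn2 := n₂ z hz
      rw [logDeriv_const_mul _ _ (div_ne_zero (neg_ne_zero.2 hα) hβ),
        logDeriv_div z hn1 hn2 (h₁ z) (h₂ z)] at hb
      have e : logDeriv w₁ z - logDeriv w₂ z = - W / (w₁ z * w₂ z) := by
        rw [logDeriv_apply, logDeriv_apply, ← hW z]; field_simp; ring
      rw [e, norm_div, norm_neg, div_le_iff₀ (norm_pos_iff.2 (mul_ne_zero hn1 hn2))] at hb
      rw [div_le_iff₀ hC]
      linarith)
  refine ⟨C', hC', fun z hz => ?_⟩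
  rw [← logDeriv_mul z (n₁ z hz) (n₂ z hz) (h₁ z) (h₂ z)]
  exact h z hz

lemma wronskian_const {A w₁ w₂ : ℂ → ℂ} (h₁ : Differentiable ℂ w₁) (h₂ : Differentiable ℂ w₂)
    (hsol₁ : ∀ z : ℂ, deriv (deriv w₁) z + A z * w₁ z = 0)
    (hsol₂ : ∀ z : ℂ, deriv (deriv w₂) z + A z * w₂ z = 0)
    (hind : LinIndepPair w₁ w₂) :
    ∃ W : ℂ, W ≠ 0 ∧ ∀ z, w₁ z * deriv w₂ z - w₂ z * deriv w₁ z = W := by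
  have hd1 : Differentiable ℂ (deriv w₁) := h₁.deriv
  have hd2 : Differentiable ℂ (deriv w₂) := h₂.deriv
  have hconst : ∀ z, w₁ z * deriv w₂ z - w₂ z * deriv w₁ z =
      w₁ 0 * deriv w₂ 0 - w₂ 0 * deriv w₁ 0 := by
    intro z
    refine is_const_of_deriv_eq_zero
      (f := fun z => w₁ z * deriv w₂ z - w₂ z * deriv w₁ z)
      ((h₁.mul hd2).sub (h₂.mul hd1)) (fun z => ?_) z 0
    have := ((h₁ z).hasDerivAt.fun_mul (hd2 z).hasDerivAt).fun_sub
      ((h₂ z).hasDerivAt.fun_mul (hd1 z).hasDerivAt)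
    rw [this.deriv]
    linear_combination w₁ z * hsol₂ z - w₂ z * hsol₁ z
  refine ⟨_, ?_, hconst⟩
  intro h0
  rw [h0] at hconst
  apply hind.1
  have hex : ∃ z₀, w₂ z₀ ≠ 0 := by
    by_contra! hall
    exact hind.2 ⟨0, fun z => by simp [hall z]⟩
  obtain ⟨z₀, hz₀⟩ := hex
  refine ⟨w₁ z₀ / w₂ z₀, ?_⟩
  have hnb : ∀ᶠ z in nhds z₀, w₂ z ≠ 0 := h₂.continuous.continuousAt.eventually_ne hz₀
  obtain ⟨ε, hε, hball⟩ := Metric.eventually_nhds_iff_ball.1 hnb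
  have hev : ∀ z ∈ Metric.ball z₀ ε, w₁ z / w₂ z = w₁ z₀ / w₂ z₀ := by
    intro z hz
    have hk : ∀ w ∈ Metric.ball z₀ ε, HasDerivAt (fun z => w₁ z / w₂ z) 0 w := by
      intro w hw
      refine ((h₁ w).hasDerivAt.fun_div (h₂ w).hasDerivAt (hball w hw)).congr_deriv ?_
      rw [div_eq_zero_iff]; left
      linear_combination - hconst w
    refine Metric.isOpen_ball.is_const_of_deriv_eq_zero (f := fun z => w₁ z / w₂ z)
      (convex_ball z₀ ε).isPreconnected ?_ ?_ hz (Metric.mem_ball_self hε)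
    · intro w hw; exact (hk w hw).differentiableAt.differentiableWithinAt
    · intro w hw; exact (hk w hw).deriv
  have hEq := AnalyticOnNhd.eq_of_eventuallyEq (f := w₁) (g := fun z => w₁ z₀ / w₂ z₀ * w₂ z)
    (z₀ := z₀)
    (fun z _ => h₁.analyticAt z)
    (fun z _ => (h₂.const_mul (w₁ z₀ / w₂ z₀)).analyticAt z)
    (by
      filter_upwards [Metric.ball_mem_nhds z₀ hε] with z hz
      rw [← hev z hz, div_mul_cancel₀ _ (hball z hz)])
  intro z
  exact congrFun hEq z

lemma half_bound {A w₁ w₂ w₃ : ℂ → ℂ}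
    (h₁ : Differentiable ℂ w₁) (h₂ : Differentiable ℂ w₂) (h₃ : Differentiable ℂ w₃)
    (hsol₁ : ∀ z : ℂ, deriv (deriv w₁) z + A z * w₁ z = 0)
    (hsol₂ : ∀ z : ℂ, deriv (deriv w₂) z + A z * w₂ z = 0)
    (hsol₃ : ∀ z : ℂ, deriv (deriv w₃) z + A z * w₃ z = 0)
    (hind₁₂ : LinIndepPair w₁ w₂) (hind₁₃ : LinIndepPair w₁ w₃)
    (hind₂₃ : LinIndepPair w₂ w₃)
    (n₁ : ∀ z : ℂ, 0 < z.im → w₁ z ≠ 0) (n₂ : ∀ z : ℂ, 0 < z.im → w₂ z ≠ 0)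
    (n₃ : ∀ z : ℂ, 0 < z.im → w₃ z ≠ 0) :
    ∃ C : ℝ, 0 < C ∧ ∀ z : ℂ, 0 < z.im → ‖A z‖ * |z.im| ^ 6 ≤ C * (1 + ‖z‖) ^ 6 := by
  obtain ⟨W₁₂, hW₁₂, e₁₂⟩ := wronskian_const h₁ h₂ hsol₁ hsol₂ hind₁₂
  obtain ⟨W₁₃, hW₁₃, e₁₃⟩ := wronskian_const h₁ h₃ hsol₁ hsol₃ hind₁₃
  obtain ⟨W₂₃, hW₂₃, e₂₃⟩ := wronskian_const h₂ h₃ hsol₂ hsol₃ hind₂₃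
  have hrel : ∀ z, W₂₃ * w₁ z + (-W₁₃) * w₂ z + W₁₂ * w₃ z = 0 := by
    intro z
    rw [← e₁₂ z, ← e₁₃ z, ← e₂₃ z]; ring
  have hn := neg_ne_zero.2 hW₁₃
  obtain ⟨C₁, hC₁, b₁⟩ := pair_bound h₁ h₂ hW₁₂ e₁₂ hW₂₃ hn hW₁₂ hrel n₁ n₂ n₃
  obtain ⟨C₂, hC₂, b₂⟩ := pair_bound h₁ h₃ hW₁₃ e₁₃ hW₂₃ hW₁₂ hn
    (fun z => by rw [← hrel z]; ring) n₁ n₃ n₂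
  obtain ⟨C₃, hC₃, b₃⟩ := pair_bound h₂ h₃ hW₂₃ e₂₃ hn hW₁₂ hW₂₃
    (fun z => by rw [← hrel z]; ring) n₂ n₃ n₁
  set B : ℂ → ℝ := fun z => (1 + 1 / z.im) * (‖z + I‖ ^ 2 / z.im ^ 2) with hB
  set C := C₁ + C₂ + C₃ with hC
  have hC0 : 0 < C := by positivity
  have hs : ∀ z : ℂ, 0 < z.im → ‖logDeriv w₁ z‖ ≤ C * B z := by
    intro z hz
    have e : 2 * logDeriv w₁ z = (logDeriv w₁ z + logDeriv w₂ z) +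
      (logDeriv w₁ z + logDeriv w₃ z) - (logDeriv w₂ z + logDeriv w₃ z) := by ring
    have t1 := norm_sub_le ((logDeriv w₁ z + logDeriv w₂ z) +
      (logDeriv w₁ z + logDeriv w₃ z)) (logDeriv w₂ z + logDeriv w₃ z)
    have t2 := norm_add_le (logDeriv w₁ z + logDeriv w₂ z) (logDeriv w₁ z + logDeriv w₃ z)
    rw [← e, norm_mul] at t1
    have t3 : ‖(2:ℂ)‖ = 2 := by simp
    rw [t3] at t1
    have hh : C * B z = C₁ * B z + C₂ * B z + C₃ * B z := by rw [hC]; ring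
    have u1 := b₁ z hz
    have u2 := b₂ z hz
    have u3 := b₃ z hz
    change _ ≤ C₁ * B z at u1
    change _ ≤ C₂ * B z at u2
    change _ ≤ C₃ * B z at u3
    linarith [norm_nonneg (logDeriv w₁ z)]
  have hd1 : Differentiable ℂ (deriv w₁) := h₁.deriv
  refine ⟨64 * C + C ^ 2, by positivity, ?_⟩
  intro z hz
  set y := z.im with hy
  set q := ‖z + I‖ with hq
  have hq1 : 1 ≤ q := one_le_norm_add_I hz
  have hqy : y ≤ q := im_le_norm_add_I hz
  have him : ∀ w ∈ Metric.closedBall z (y/2), y / 2 ≤ w.im := by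
    intro w hw
    rw [mem_closedBall_iff_norm] at hw
    have := (abs_im_le_norm (w - z)).trans hw
    rw [abs_le, sub_im] at this
    linarith [this.1]
  have hcau := Complex.norm_deriv_le_of_forall_mem_sphere_norm_le
    (f := logDeriv w₁) (c := z) (R := y / 2) (C := C * (32 * B z)) (by linarith)
    (by
      refine DifferentiableOn.diffContOnCl ?_
      rw [closure_ball _ (by linarith)]
      intro w hw
      have : 0 < w.im := by linarith [him w hw]
      exact ((hd1 w).div (h₁ w) (n₁ w this)).differentiableWithinAt)
    (by
      intro w hw
      have hw' := Metric.sphere_subset_closedBall hw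
      have hwi := him w hw'
      have hw0 : 0 < w.im := by linarith
      refine (hs w hw0).trans ?_
      have hq2 : ‖w + I‖ ≤ 2 * q := by
        rw [mem_closedBall_iff_norm] at hw'
        calc ‖w + I‖ = ‖(w - z) + (z + I)‖ := by ring_nf
          _ ≤ ‖w - z‖ + ‖z + I‖ := norm_add_le _ _
          _ ≤ 2 * q := by linarith
      have : B w ≤ (1 + 1 / (y / 2)) * ((2 * q) ^ 2 / (y / 2) ^ 2) := by
        change (1 + 1 / w.im) * (‖w + I‖ ^ 2 / w.im ^ 2) ≤ _
        gcongr
      have h2 : (1 + 1 / (y / 2)) * ((2 * q) ^ 2 / (y / 2) ^ 2) ≤ 32 * B z := by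
        have e1 : (2 * q) ^ 2 / (y / 2) ^ 2 = 16 * (q ^ 2 / y ^ 2) := by field_simp; norm_num
        have e2 : 1 / (y / 2) = 2 * (1 / y) := by field_simp
        have e3 : B z = (1 + 1 / y) * (q ^ 2 / y ^ 2) := rfl
        rw [e1, e2, e3]
        have : 0 ≤ q ^ 2 / y ^ 2 := by positivity
        have : 0 < 1 / y := by positivity
        nlinarith
      gcongr
      linarith)
  have hder : HasDerivAt (logDeriv w₁) (- A z - logDeriv w₁ z ^ 2) z := by
    have hnz := n₁ z hz
    refine ((hd1 z).hasDerivAt.div (h₁ z).hasDerivAt hnz).congr_deriv ?_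
    have : deriv (deriv w₁) z = - A z * w₁ z := by linear_combination hsol₁ z
    rw [this, logDeriv_apply]; field_simp
  rw [hder.deriv] at hcau
  have hA : ‖A z‖ ≤ C * (32 * B z) / (y / 2) + (C * B z) ^ 2 := by
    have e : A z = - ((- A z - logDeriv w₁ z ^ 2) + logDeriv w₁ z ^ 2) := by ring
    calc ‖A z‖ = ‖(- A z - logDeriv w₁ z ^ 2) + logDeriv w₁ z ^ 2‖ := by
          conv_lhs => rw [e]
          rw [norm_neg]
      _ ≤ ‖- A z - logDeriv w₁ z ^ 2‖ + ‖logDeriv w₁ z ^ 2‖ := norm_add_le _ _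
      _ ≤ _ := by
        rw [norm_pow]
        have := hs z hz
        gcongr
  rw [abs_of_pos hz]
  have hBz : B z * y ^ 3 = (y + 1) * q ^ 2 := by
    change (1 + 1 / y) * (q ^ 2 / y ^ 2) * y ^ 3 = _
    field_simp
  have hyz : y ≤ ‖z‖ := (le_abs_self _).trans (abs_im_le_norm z)
  have hqz : q ≤ 1 + ‖z‖ := by
    have := norm_add_le z I
    rw [norm_I] at this; linarith
  set X := 1 + ‖z‖ with hX
  have hX1 : 1 ≤ X := by linarith [norm_nonneg z]
  have hB3 : B z * y ^ 3 ≤ X ^ 3 := by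
    rw [hBz]
    calc (y + 1) * q ^ 2 ≤ X * X ^ 2 := by
          gcongr
          linarith
      _ = X ^ 3 := by ring
  have hB0 : 0 ≤ B z * y ^ 3 := by rw [hBz]; positivity
  have hy2 : y ^ 2 ≤ X ^ 3 := by
    calc y ^ 2 ≤ X ^ 2 := by gcongr; linarith
      _ ≤ X ^ 3 := pow_le_pow_right₀ hX1 (by norm_num)
  calc ‖A z‖ * y ^ 6 ≤ (C * (32 * B z) / (y / 2) + (C * B z) ^ 2) * y ^ 6 := by gcongr
    _ = 64 * C * ((B z * y ^ 3) * y ^ 2) + C ^ 2 * (B z * y ^ 3) ^ 2 := by field_simp; ring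
    _ ≤ 64 * C * (X ^ 3 * X ^ 3) + C ^ 2 * (X ^ 3) ^ 2 := by gcongr
    _ = _ := by ring

lemma bounded_of_strip {A : ℂ → ℂ} (hA : Differentiable ℂ A) {C : ℝ} (hC : 0 < C)
    (h : ∀ z : ℂ, ‖A z‖ * |z.im| ^ 6 ≤ C * (1 + ‖z‖) ^ 6) (z : ℂ) :
    ‖A z‖ ≤ C * 2 ^ 18 := by
  set R : ℝ := 2 * ‖z‖ + 1 with hR
  have hz0 := norm_nonneg z
  have hR1 : 1 ≤ R := by linarith
  have hmax := Complex.norm_le_of_forall_mem_frontier_norm_le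
    (f := fun u => A u * (u ^ 2 - (R:ℂ) ^ 2) ^ 6) (U := Metric.ball 0 R) (C := C * (2 * R) ^ 12)
    Metric.isBounded_ball
    (by
      have : Differentiable ℂ (fun u => A u * (u ^ 2 - (R:ℂ) ^ 2) ^ 6) := by fun_prop
      exact this.diffContOnCl)
    (by
      intro u hu
      rw [frontier_ball _ (by linarith), mem_sphere_zero_iff_norm] at hu
      have e : u ^ 2 - (R:ℂ) ^ 2 = 2 * I * u.im * u := by
        have h1 : (R:ℂ) ^ 2 = (starRingEnd ℂ u) * u := by
          rw [conj_mul', hu]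
        have h2 : u - starRingEnd ℂ u = 2 * I * u.im := by
          rw [sub_conj]; push_cast; ring
        rw [h1, ← h2]; ring
      rw [e]
      simp only [norm_mul, norm_pow, norm_I, norm_real, Real.norm_eq_abs, hu]
      have hb := h u
      rw [hu] at hb
      have h3 : C * (1 + R) ^ 6 ≤ C * (2 * R) ^ 6 := by gcongr; linarith
      have : ‖(2:ℂ)‖ = 2 := by simp
      rw [this]
      calc ‖A u‖ * (2 * 1 * |u.im| * R) ^ 6 = (‖A u‖ * |u.im| ^ 6) * (2 * R) ^ 6 := by ring
        _ ≤ (C * (2 * R) ^ 6) * (2 * R) ^ 6 := by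
            exact mul_le_mul_of_nonneg_right (hb.trans h3) (by positivity)
        _ = _ := by ring)
    (z := z) (subset_closure (by rw [mem_ball_zero_iff]; linarith))
  simp only [norm_mul, norm_pow] at hmax
  have hlow : R ^ 2 / 2 ≤ ‖z ^ 2 - (R:ℂ) ^ 2‖ := by
    have := norm_sub_norm_le ((R:ℂ) ^ 2) (z ^ 2)
    rw [norm_sub_rev, norm_pow, norm_pow, norm_real, Real.norm_of_nonneg (by linarith)] at this
    nlinarith
  have h4 : ‖A z‖ * (R ^ 2 / 2) ^ 6 ≤ C * (2 * R) ^ 12 := by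
    refine le_trans ?_ hmax
    gcongr
  have h5 : C * (2 * R) ^ 12 = (C * 2 ^ 18) * (R ^ 2 / 2) ^ 6 := by ring
  rw [h5] at h4
  exact le_of_mul_le_mul_right h4 (by positivity)

lemma neg_sol {A w : ℂ → ℂ}
    (hsol : ∀ z : ℂ, deriv (deriv w) z + A z * w z = 0) (z : ℂ) :
    deriv (deriv (fun z => w (-z))) z + A (-z) * w (-z) = 0 := by
  have e1 : deriv (fun z => w (-z)) = fun z => - deriv w (-z) := by
    funext u; exact deriv_comp_neg w u
  have e2 : deriv (fun z => - deriv w (-z)) z = deriv (deriv w) (-z) := by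
    rw [deriv.fun_neg, deriv_comp_neg (deriv w) z, neg_neg]
  rw [e1, e2]; exact hsol (-z)

lemma neg_indep {f g : ℂ → ℂ} (h : LinIndepPair f g) :
    LinIndepPair (fun z => f (-z)) (fun z => g (-z)) := by
  refine ⟨fun ⟨c, hc⟩ => h.1 ⟨c, fun z => ?_⟩, fun ⟨c, hc⟩ => h.2 ⟨c, fun z => ?_⟩⟩
  · simpa using hc (-z)
  · simpa using hc (-z)

/-- If the equation `w'' + A·w = 0` with entire coefficient `A` has three pairwise
linearly independent entire solutions, each with only real zeros, then `A` is constant. -/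
theorem stmt3 (A w₁ w₂ w₃ : ℂ → ℂ) (hA : Differentiable ℂ A)
    (h₁ : Differentiable ℂ w₁) (h₂ : Differentiable ℂ w₂) (h₃ : Differentiable ℂ w₃)
    (hsol₁ : ∀ z : ℂ, deriv (deriv w₁) z + A z * w₁ z = 0)
    (hsol₂ : ∀ z : ℂ, deriv (deriv w₂) z + A z * w₂ z = 0)
    (hsol₃ : ∀ z : ℂ, deriv (deriv w₃) z + A z * w₃ z = 0)
    (hind₁₂ : LinIndepPair w₁ w₂) (hind₁₃ : LinIndepPair w₁ w₃)
    (hind₂₃ : LinIndepPair w₂ w₃)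
    (hz₁ : ∀ z : ℂ, w₁ z = 0 → z.im = 0)
    (hz₂ : ∀ z : ℂ, w₂ z = 0 → z.im = 0)
    (hz₃ : ∀ z : ℂ, w₃ z = 0 → z.im = 0) :
    ∃ c : ℂ, ∀ z : ℂ, A z = c := by
  obtain ⟨C, hC, hup⟩ := half_bound h₁ h₂ h₃ hsol₁ hsol₂ hsol₃ hind₁₂ hind₁₃ hind₂₃
    (fun z hz h => hz.ne' (hz₁ z h)) (fun z hz h => hz.ne' (hz₂ z h))
    (fun z hz h => hz.ne' (hz₃ z h))
  obtain ⟨C', hC', hlo⟩ := half_bound (A := fun z => A (-z)) (w₁ := fun z => w₁ (-z))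
    (w₂ := fun z => w₂ (-z)) (w₃ := fun z => w₃ (-z))
    (h₁.comp differentiable_neg) (h₂.comp differentiable_neg) (h₃.comp differentiable_neg)
    (neg_sol hsol₁) (neg_sol hsol₂) (neg_sol hsol₃)
    (neg_indep hind₁₂) (neg_indep hind₁₃) (neg_indep hind₂₃)
    (fun z hz h => by have := hz₁ _ h; simp at this; linarith)
    (fun z hz h => by have := hz₂ _ h; simp at this; linarith)
    (fun z hz h => by have := hz₃ _ h; simp at this; linarith)
  have hall : ∀ z : ℂ, ‖A z‖ * |z.im| ^ 6 ≤ (C + C') * (1 + ‖z‖) ^ 6 := by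
    intro z
    have hp : 0 ≤ (1 + ‖z‖) ^ 6 := by positivity
    rcases lt_trichotomy z.im 0 with h | h | h
    · have := hlo (-z) (by simpa using h)
      simp only [neg_neg, neg_im, abs_neg, norm_neg] at this
      nlinarith
    · rw [h]; simp; positivity
    · have := hup z h
      nlinarith
  refine ⟨A 0, fun z => hA.apply_eq_apply_of_bounded ?_ z 0⟩
  refine isBounded_iff_forall_norm_le.2 ⟨(C + C') * 2 ^ 18, ?_⟩
  rintro _ ⟨z, rfl⟩
  exact bounded_of_strip hA (by linarith) hall z
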